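/- Let i = (c, a, b) be a knapsack instance of dimension n with a_1,…,a_n > 0 and b ≥ 0, let V be a value function for i, let k ∈ {1,…,n}, and let η ∈ B_{n,k} satisfy Σ_{j=k+1}^n a_j η_j ≤ b. Then Δ̄(k; i, η) ≤ Σ_{ℓ=1}^{k} Σ { δ̄(ℓ; i, ξ) : ξ ∈ Ξ_ℓ(η,k) and Σ_{j=ℓ+1}^n a_j ξ_j ≤ b }. -/

import Mathlib

/-!
The optimal values satisfy the Bellman equation `V*(ℓ; ·) = T_ℓ V*(ℓ-1; ·)` on feasible states, and
the error `|T_ℓ W - T_ℓ W'|` at a state is controlled by `|W - W'|` at its successors because `max`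
is 1-Lipschitz. Hence `Δ̄(ℓ; η)` is at most the residual `δ̄(ℓ; η)` plus the errors at level `ℓ-1`
in `η` and, if item `ℓ` fits, in `η + e^ℓ`. The sum of residuals satisfies the same recursion with
equality, since `Ξ_ℓ(η, ℓ) = {η}` and, for `m < ℓ`, the set `Ξ_m(η, ℓ)` is the disjoint union of
`Ξ_m(η, ℓ-1)` and `Ξ_m(η + e^ℓ, ℓ-1)`.
-/

/-- `upd n ξ p` is `ξ + e^{p+1}`, i.e. `ξ` with the (0-indexed) position `p` set to `1`. -/
def upd (n : ℕ) (ξ : Fin n → Bool) (p : ℕ) : Fin n → Bool :=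
  fun j => if j.val = p then true else ξ j

/-- `headSum n k a x = Σ_{j=1}^{k} a_j x_j` (0-indexed positions `< k`). -/
def headSum (n k : ℕ) (a : Fin n → ℝ) (x : Fin n → Bool) : ℝ :=
  ∑ j ∈ Finset.univ.filter (fun j : Fin n => j.val < k), if x j then a j else 0

/-- `tailSum n k a ξ = Σ_{j=k+1}^{n} a_j ξ_j` (0-indexed positions `≥ k`). -/
def tailSum (n k : ℕ) (a : Fin n → ℝ) (ξ : Fin n → Bool) : ℝ :=
  ∑ j ∈ Finset.univ.filter (fun j : Fin n => k ≤ j.val), if ξ j then a j else 0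

/-- `knapSubVal n c a b k ξ` is `V*(k; i, ξ)` for the knapsack instance `i = (c,a,b)`:
the maximum of `Σ_{j=1}^k c_j x_j` over `(x_1,…,x_k) ∈ {0,1}^k` subject to
`Σ_{j=1}^k a_j x_j ≤ b − Σ_{j=k+1}^n a_j ξ_j` (and `V*(0; i, ξ) = 0`). -/
noncomputable def knapSubVal (n : ℕ) (c a : Fin n → ℝ) (b : ℝ) (k : ℕ) (ξ : Fin n → Bool) : ℝ :=
  sSup {v | ∃ x : Fin n → Bool,
    headSum n k a x ≤ b - tailSum n k a ξ ∧ v = headSum n k c x}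

section FinSum

variable {n : ℕ} {M : Type*} [AddCommMonoid M]

lemma sum_filter_val_lt_succ (p : Fin n) (f : Fin n → M) :
    ∑ j with j.val < p.val + 1, f j = f p + ∑ j with j.val < p.val, f j := by
  have h : Finset.univ.filter (fun j : Fin n => j.val < p.val + 1) =
      insert p (Finset.univ.filter fun j : Fin n => j.val < p.val) := by
    ext j
    simp only [Finset.mem_filter_univ, Finset.mem_insert, Fin.ext_iff]
    omega
  rw [h, Finset.sum_insert (by simp)]

lemma sum_filter_le_val (p : Fin n) (f : Fin n → M) :
    ∑ j with p.val ≤ j.val, f j = f p + ∑ j with p.val + 1 ≤ j.val, f j := by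
  have h : Finset.univ.filter (fun j : Fin n => p.val ≤ j.val) =
      insert p (Finset.univ.filter fun j : Fin n => p.val + 1 ≤ j.val) := by
    ext j
    simp only [Finset.mem_filter_univ, Finset.mem_insert, Fin.ext_iff]
    omega
  rw [h, Finset.sum_insert (by simp)]

end FinSum

variable {n : ℕ} {c a : Fin n → ℝ} {b : ℝ}

lemma upd_apply_self (ξ : Fin n → Bool) (p : Fin n) : upd n ξ p.val p = true :=
  if_pos rfl

lemma upd_apply_of_ne (ξ : Fin n → Bool) {p : ℕ} {j : Fin n} (h : j.val ≠ p) :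
    upd n ξ p j = ξ j :=
  if_neg h

lemma headSum_nonneg (ha : ∀ j, 0 ≤ a j) (k : ℕ) (x : Fin n → Bool) : 0 ≤ headSum n k a x :=
  Finset.sum_nonneg fun j _ => ite_nonneg (ha j) le_rfl

lemma headSum_succ (a : Fin n → ℝ) (p : Fin n) (x : Fin n → Bool) :
    headSum n (p.val + 1) a x = (if x p then a p else 0) + headSum n p.val a x :=
  sum_filter_val_lt_succ p _

lemma headSum_succ_update (a : Fin n → ℝ) (p : Fin n) (x : Fin n → Bool) (t : Bool) :
    headSum n (p.val + 1) a (Function.update x p t) =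
      (if t then a p else 0) + headSum n p.val a x := by
  have h : headSum n p.val a (Function.update x p t) = headSum n p.val a x := by
    refine Finset.sum_congr rfl fun j hj => ?_
    rw [Function.update_of_ne (Fin.ne_of_lt (Finset.mem_filter.1 hj).2)]
  rw [headSum_succ, Function.update_self, h]

lemma tailSum_eq_add_succ (a : Fin n → ℝ) (p : Fin n) (ξ : Fin n → Bool) :
    tailSum n p.val a ξ = (if ξ p then a p else 0) + tailSum n (p.val + 1) a ξ :=
  sum_filter_le_val p _

lemma tailSum_of_apply_eq_false (a : Fin n → ℝ) {p : Fin n} {ξ : Fin n → Bool}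
    (hp : ξ p = false) : tailSum n p.val a ξ = tailSum n (p.val + 1) a ξ := by
  simp [tailSum_eq_add_succ, hp]

lemma tailSum_upd (a : Fin n → ℝ) (p : Fin n) (ξ : Fin n → Bool) :
    tailSum n p.val a (upd n ξ p.val) = a p + tailSum n (p.val + 1) a ξ := by
  have h : tailSum n (p.val + 1) a (upd n ξ p.val) = tailSum n (p.val + 1) a ξ := by
    refine Finset.sum_congr rfl fun j hj => ?_
    rw [upd_apply_of_ne ξ (Nat.ne_of_gt (Finset.mem_filter.1 hj).2)]
  rw [tailSum_eq_add_succ, upd_apply_self, if_pos rfl, h]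

/-- The objective values attainable with the first `k` items and capacity `B`. Unlike in
`knapSubVal`, the residual capacity is a parameter of its own. -/
def attainableValues (c a : Fin n → ℝ) (k : ℕ) (B : ℝ) : Set ℝ :=
  {v | ∃ x : Fin n → Bool, headSum n k a x ≤ B ∧ v = headSum n k c x}

lemma knapSubVal_eq_sSup (c a : Fin n → ℝ) (b : ℝ) (k : ℕ) (ξ : Fin n → Bool) :
    knapSubVal n c a b k ξ = sSup (attainableValues c a k (b - tailSum n k a ξ)) :=
  rfl

lemma attainableValues_finite (c a : Fin n → ℝ) (k : ℕ) (B : ℝ) :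
    (attainableValues c a k B).Finite :=
  (Set.finite_range (headSum n k c)).subset fun _ ⟨x, _, hv⟩ => ⟨x, hv.symm⟩

lemma attainableValues_nonempty (c a : Fin n → ℝ) (k : ℕ) {B : ℝ} (hB : 0 ≤ B) :
    (attainableValues c a k B).Nonempty :=
  ⟨_, fun _ => false, by simpa [headSum] using hB, rfl⟩

lemma attainableValues_eq_empty (c : Fin n → ℝ) (ha : ∀ j, 0 ≤ a j) (k : ℕ) {B : ℝ}
    (hB : B < 0) : attainableValues c a k B = ∅ :=
  Set.eq_empty_of_forall_notMem fun _ ⟨x, hx, _⟩ =>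
    (headSum_nonneg ha k x).not_gt (hx.trans_lt hB)

lemma attainableValues_zero (c a : Fin n → ℝ) {B : ℝ} (hB : 0 ≤ B) :
    attainableValues c a 0 B = {0} := by
  ext v
  simp [attainableValues, headSum, hB]

lemma attainableValues_succ (c a : Fin n → ℝ) (p : Fin n) (B : ℝ) :
    attainableValues c a (p.val + 1) B =
      attainableValues c a p.val B ∪ (c p + ·) '' attainableValues c a p.val (B - a p) := by
  ext v
  constructor
  · rintro ⟨x, hx, rfl⟩
    rw [headSum_succ] at hx ⊢
    cases hxp : x p <;> simp only [hxp, Bool.false_eq_true, if_true, if_false, zero_add] at hx ⊢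
    · exact Or.inl ⟨x, hx, rfl⟩
    · exact Or.inr ⟨_, ⟨x, by linarith, rfl⟩, rfl⟩
  · rintro (⟨x, hx, rfl⟩ | ⟨_, ⟨x, hx, rfl⟩, rfl⟩)
    · exact ⟨Function.update x p false, by simpa [headSum_succ_update] using hx,
        by simp [headSum_succ_update]⟩
    · exact ⟨Function.update x p true, by simp only [headSum_succ_update, if_true]; linarith,
        by simp [headSum_succ_update]⟩

/-- The Bellman operator of item `p`, sending a function `W` on the states with item `p` decided to
one on the states with item `p` still open. -/
noncomputable def bellman (c a : Fin n → ℝ) (b : ℝ) (p : Fin n) (W : (Fin n → Bool) → ℝ)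
    (ξ : Fin n → Bool) : ℝ :=
  if a p + tailSum n (p.val + 1) a ξ ≤ b then max (W ξ) (c p + W (upd n ξ p.val)) else W ξ

lemma knapSubVal_zero (c : Fin n → ℝ) {ξ : Fin n → Bool} (hξ : tailSum n 0 a ξ ≤ b) :
    knapSubVal n c a b 0 ξ = 0 := by
  rw [knapSubVal_eq_sSup, attainableValues_zero c a (sub_nonneg.2 hξ), csSup_singleton]

theorem knapSubVal_succ_eq_bellman (c : Fin n → ℝ) (ha : ∀ j, 0 ≤ a j) {p : Fin n}
    {ξ : Fin n → Bool} (hp : ξ p = false) (hξ : tailSum n (p.val + 1) a ξ ≤ b) :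
    knapSubVal n c a b (p.val + 1) ξ = bellman c a b p (knapSubVal n c a b p.val) ξ := by
  simp only [bellman, knapSubVal_eq_sSup, tailSum_upd, tailSum_of_apply_eq_false a hp,
    attainableValues_succ]
  set B := b - tailSum n (p.val + 1) a ξ
  have hB_upd : b - (a p + tailSum n (p.val + 1) a ξ) = B - a p := by ring
  rw [hB_upd]
  split_ifs with hfit
  · have hfin := attainableValues_finite c a p.val
    have hne : (attainableValues c a p.val (B - a p)).Nonempty :=
      attainableValues_nonempty c a _ (by linarith)
    have htranslate : sSup ((c p + ·) '' attainableValues c a p.val (B - a p)) =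
        c p + sSup (attainableValues c a p.val (B - a p)) :=
      ((OrderIso.addLeft (c p)).map_csSup' hne (hfin _).bddAbove).symm
    rw [csSup_union (hfin B).bddAbove (attainableValues_nonempty c a _ (sub_nonneg.2 hξ))
      ((hfin _).image _).bddAbove (hne.image _), htranslate]
  · rw [attainableValues_eq_empty c ha _ (by linarith : B - a p < 0), Set.image_empty,
      Set.union_empty]

lemma abs_bellman_sub_bellman_le (c a : Fin n → ℝ) (b : ℝ) (p : Fin n)
    (W W' : (Fin n → Bool) → ℝ) (ξ : Fin n → Bool) :
    |bellman c a b p W ξ - bellman c a b p W' ξ| ≤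
      |W ξ - W' ξ| + if a p + tailSum n (p.val + 1) a ξ ≤ b then
        |W (upd n ξ p.val) - W' (upd n ξ p.val)| else 0 := by
  unfold bellman
  split_ifs
  · refine (abs_max_sub_max_le_max _ _ _ _).trans ?_
    rw [add_sub_add_left_eq_sub]
    exact max_le_add_of_nonneg (abs_nonneg _) (abs_nonneg _)
  · rw [add_zero]

/-- The absolute Bellman residual `δ̄(ℓ; i, ξ)`, where `p` is item `ℓ`, that is,
`p.val = ℓ - 1`. -/
noncomputable def absResidual (c a : Fin n → ℝ) (b : ℝ) (V : ℕ → (Fin n → Bool) → ℝ) (p : Fin n)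
    (ξ : Fin n → Bool) : ℝ :=
  |bellman c a b p (V p.val) ξ - V (p.val + 1) ξ|

lemma absResidual_eq_ite (c a : Fin n → ℝ) (b : ℝ) (V : ℕ → (Fin n → Bool) → ℝ) (p : Fin n)
    (ξ : Fin n → Bool) :
    absResidual c a b V p ξ =
      if a p + tailSum n (p.val + 1) a ξ ≤ b then
        |max (V p.val ξ) (c p + V p.val (upd n ξ p.val)) - V (p.val + 1) ξ|
      else
        |V p.val ξ - V (p.val + 1) ξ| := by
  unfold absResidual bellman
  split_ifs <;> rfl

/-- The feasible elements of `Ξ_ℓ(η, k)`, where `p` is item `ℓ`, that is, `p.val = ℓ - 1`. -/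
noncomputable def feasibleExtensions (a : Fin n → ℝ) (b : ℝ) (k : ℕ) (η : Fin n → Bool)
    (p : Fin n) : Finset (Fin n → Bool) :=
  Finset.univ.filter fun ξ : Fin n → Bool =>
    (∀ j : Fin n, j.val ≤ p.val → ξ j = false) ∧
    (∀ j : Fin n, k ≤ j.val → ξ j = η j) ∧
    tailSum n (p.val + 1) a ξ ≤ b

lemma feasibleExtensions_self {p : Fin n} {η : Fin n → Bool}
    (hη : ∀ j : Fin n, j.val < p.val + 1 → η j = false) (hfeas : tailSum n (p.val + 1) a η ≤ b) :
    feasibleExtensions a b (p.val + 1) η p = {η} := by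
  ext ξ
  simp only [feasibleExtensions, Finset.mem_filter_univ, Finset.mem_singleton]
  constructor
  · rintro ⟨hlow, hhigh, -⟩
    ext j
    rcases lt_or_ge j.val (p.val + 1) with hj | hj
    · rw [hlow j (Nat.le_of_lt_succ hj), hη j hj]
    · rw [hhigh j hj]
  · rintro rfl
    exact ⟨fun j hj => hη j (Nat.lt_succ_of_le hj), fun _ _ => rfl, hfeas⟩

lemma forall_le_val_iff {p : Fin n} {P : Fin n → Prop} :
    (∀ j : Fin n, p.val ≤ j.val → P j) ↔ P p ∧ ∀ j : Fin n, p.val + 1 ≤ j.val → P j := by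
  refine ⟨fun h => ⟨h p le_rfl, fun j hj => h j (Nat.le_of_succ_le hj)⟩, fun h j hj => ?_⟩
  rcases hj.eq_or_lt with hj | hj
  · exact Fin.ext hj ▸ h.1
  · exact h.2 j hj

lemma mem_feasibleExtensions_iff_succ {p q : Fin n} {ξ η : Fin n → Bool} :
    ξ ∈ feasibleExtensions a b p.val η q ↔
      ξ p = η p ∧ ξ ∈ feasibleExtensions a b (p.val + 1) η q := by
  simp only [feasibleExtensions, Finset.mem_filter_univ, forall_le_val_iff (p := p)]
  tauto

lemma feasibleExtensions_succ_upd (a : Fin n → ℝ) (b : ℝ) (p q : Fin n) (η : Fin n → Bool) :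
    feasibleExtensions a b (p.val + 1) (upd n η p.val) q =
      feasibleExtensions a b (p.val + 1) η q := by
  have h (j : Fin n) (hj : p.val + 1 ≤ j.val) : upd n η p.val j = η j :=
    upd_apply_of_ne η (Nat.ne_of_gt hj)
  ext ξ
  simp +contextual only [feasibleExtensions, Finset.mem_filter_univ, h]

lemma sum_feasibleExtensions_succ {M : Type*} [AddCommMonoid M] (a : Fin n → ℝ) (b : ℝ)
    {p : Fin n} (q : Fin n) {η : Fin n → Bool} (hp : η p = false) (f : (Fin n → Bool) → M) :
    ∑ ξ ∈ feasibleExtensions a b (p.val + 1) η q, f ξ =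
      ∑ ξ ∈ feasibleExtensions a b p.val η q, f ξ +
        ∑ ξ ∈ feasibleExtensions a b p.val (upd n η p.val) q, f ξ := by
  rw [← Finset.sum_filter_add_sum_filter_not _ (fun ξ : Fin n → Bool => ξ p = false)]
  congr 2 <;> ext ξ <;>
    rw [Finset.mem_filter, mem_feasibleExtensions_iff_succ, and_comm]
  · rw [hp]
  · rw [upd_apply_self, feasibleExtensions_succ_upd, Bool.not_eq_false]

/-- The right-hand side of the error estimate: the sum of `δ̄(ℓ; i, ξ)` over all levels `ℓ ≤ k` and
all feasible `ξ ∈ Ξ_ℓ(η, k)`. -/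
noncomputable def residualSum (c a : Fin n → ℝ) (b : ℝ) (V : ℕ → (Fin n → Bool) → ℝ) (k : ℕ)
    (η : Fin n → Bool) : ℝ :=
  ∑ p : Fin n with p.val < k, ∑ ξ ∈ feasibleExtensions a b k η p, absResidual c a b V p ξ

lemma residualSum_nonneg (c a : Fin n → ℝ) (b : ℝ) (V : ℕ → (Fin n → Bool) → ℝ) (k : ℕ)
    (η : Fin n → Bool) : 0 ≤ residualSum c a b V k η :=
  Finset.sum_nonneg fun _ _ => Finset.sum_nonneg fun _ _ => abs_nonneg _

lemma residualSum_succ (c : Fin n → ℝ) (V : ℕ → (Fin n → Bool) → ℝ) {p : Fin n}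
    {η : Fin n → Bool} (hη : ∀ j : Fin n, j.val < p.val + 1 → η j = false)
    (hfeas : tailSum n (p.val + 1) a η ≤ b) :
    residualSum c a b V (p.val + 1) η =
      absResidual c a b V p η +
        (residualSum c a b V p.val η + residualSum c a b V p.val (upd n η p.val)) := by
  unfold residualSum
  rw [sum_filter_val_lt_succ, feasibleExtensions_self hη hfeas, Finset.sum_singleton,
    ← Finset.sum_add_distrib]
  simp only [sum_feasibleExtensions_succ a b _ (hη p (Nat.lt_succ_self _))]

lemma abs_knapSubVal_succ_sub_le (c : Fin n → ℝ) (ha : ∀ j, 0 ≤ a j)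
    (V : ℕ → (Fin n → Bool) → ℝ) {p : Fin n} {η : Fin n → Bool} (hp : η p = false)
    (hfeas : tailSum n (p.val + 1) a η ≤ b) :
    |knapSubVal n c a b (p.val + 1) η - V (p.val + 1) η| ≤
      absResidual c a b V p η + (|knapSubVal n c a b p.val η - V p.val η| +
        if a p + tailSum n (p.val + 1) a η ≤ b then
          |knapSubVal n c a b p.val (upd n η p.val) - V p.val (upd n η p.val)| else 0) := by
  rw [knapSubVal_succ_eq_bellman c ha hp hfeas, add_comm (absResidual c a b V p η)]
  exact (abs_sub_le _ (bellman c a b p (V p.val) η) _).trans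
    (add_le_add_left (abs_bellman_sub_bellman_le ..) _)

theorem abs_knapSubVal_sub_le_residualSum (c : Fin n → ℝ) (ha : ∀ j, 0 ≤ a j)
    {V : ℕ → (Fin n → Bool) → ℝ} (hV0 : ∀ ξ, V 0 ξ = 0) {k : ℕ} (hk : k ≤ n)
    {η : Fin n → Bool} (hη : ∀ j : Fin n, j.val < k → η j = false)
    (hfeas : tailSum n k a η ≤ b) :
    |knapSubVal n c a b k η - V k η| ≤ residualSum c a b V k η := by
  induction k generalizing η with
  | zero =>
    rw [knapSubVal_zero c hfeas, hV0, sub_zero, abs_zero]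
    exact residualSum_nonneg c a b V 0 η
  | succ k ih =>
    obtain ⟨p, rfl⟩ : ∃ p : Fin n, p.val = k := ⟨⟨k, hk⟩, rfl⟩
    have hp : η p = false := hη p (Nat.lt_succ_self _)
    have hlow (j : Fin n) (hj : j.val < p.val) : η j = false := hη j (Nat.lt_succ_of_lt hj)
    rw [residualSum_succ c V hη hfeas]
    refine (abs_knapSubVal_succ_sub_le c ha V hp hfeas).trans ?_
    gcongr
    · exact ih p.isLt.le hlow (tailSum_of_apply_eq_false a hp ▸ hfeas)
    · split_ifs with hfit
      · refine ih p.isLt.le (fun j hj => ?_) (tailSum_upd a p η ▸ hfit)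
        rw [upd_apply_of_ne η hj.ne, hlow j hj]
      · exact residualSum_nonneg c a b V p.val (upd n η p.val)

/-- For a knapsack instance `i = (c,a,b)` of dimension `n` with
`a_j > 0` and `b ≥ 0`, a value function `V` for `i` (`V(0; i, ·) = 0`), `k ∈ {1,…,n}`
and `η ∈ B_{n,k}` with `Σ_{j>k} a_j η_j ≤ b`:
`Δ̄(k; i, η) ≤ Σ_{ℓ=1}^{k} Σ { δ̄(ℓ; i, ξ) : ξ ∈ Ξ_ℓ(η,k), Σ_{j>ℓ} a_j ξ_j ≤ b }`.
Below the summation index `ℓ : Fin n` with `ℓ.val < k` represents the level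
`ℓ.val + 1 ∈ {1,…,k}`, so `a_ℓ = a ℓ`, `c_ℓ = c ℓ` and `e^ℓ = upd · ℓ.val`. -/
theorem knap_Delta_le_sum_delta (n : ℕ) (c a : Fin n → ℝ) (b : ℝ)
    (ha : ∀ j, 0 < a j) (hb : 0 ≤ b)
    (V : ℕ → (Fin n → Bool) → ℝ) (hV0 : ∀ ξ, V 0 ξ = 0)
    (k : ℕ) (hk1 : 1 ≤ k) (hk2 : k ≤ n)
    (η : Fin n → Bool) (hη : ∀ j : Fin n, j.val < k → η j = false)
    (hfeas : tailSum n k a η ≤ b) :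
    |knapSubVal n c a b k η - V k η| ≤
      ∑ ℓ ∈ Finset.univ.filter (fun ℓ : Fin n => ℓ.val < k),
        ∑ ξ ∈ Finset.univ.filter (fun ξ : Fin n → Bool =>
            (∀ j : Fin n, j.val ≤ ℓ.val → ξ j = false) ∧
            (∀ j : Fin n, k ≤ j.val → ξ j = η j) ∧
            tailSum n (ℓ.val + 1) a ξ ≤ b),
          (if a ℓ + tailSum n (ℓ.val + 1) a ξ ≤ b then
            |max (V ℓ.val ξ) (c ℓ + V ℓ.val (upd n ξ ℓ.val)) - V (ℓ.val + 1) ξ|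
          else
            |V ℓ.val ξ - V (ℓ.val + 1) ξ|) := by
  simpa only [residualSum, feasibleExtensions, absResidual_eq_ite] using
    abs_knapSubVal_sub_le_residualSum c (fun j => (ha j).le) hV0 hk2 hη hfeas
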